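/- For each j ≥ 0, the image under V of N^bo_{4j} (the F_2-span of the monomials of B of weight 4j) is exactly M_HZ(2j), the F_2-span of the monomials of Z of weight at most 2j; moreover, for each degree d, V restricts to an F_2-linear isomorphism from the degree-d part of N^bo_{4j} onto the degree-(d − 4j) part of M_HZ(2j). In other words, as graded F_2-vector spaces N^bo_{4j} ≅ Σ^{4j} M_HZ(2j). (M_HZ(2j) is the homology of the j-th integral Brown–Gitler spectrum.) -/

import Mathlib

open MvPolynomial

noncomputable section

/-- The dual Steenrod algebra at p = 2: the polynomial algebra `F₂[ζ₁, ζ₂, …]`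
over `F₂ = ZMod 2` with variables indexed by the positive integers. -/
abbrev DualSteenrod : Type := MvPolynomial ℕ+ (ZMod 2)

/-- The weight of the monomial `ζ^I`: `ω(ζ^I) = Σᵢ Iᵢ · 2^(i-1)`. -/
def wt (I : ℕ+ →₀ ℕ) : ℕ := I.sum fun i e => e * 2 ^ ((i : ℕ) - 1)

/-- The degree of the monomial `ζ^I`: `deg(ζ^I) = Σᵢ Iᵢ · (2^i − 1)`,
coming from the grading `deg(ζᵢ) = 2^i − 1`. -/
def degW (I : ℕ+ →₀ ℕ) : ℕ := I.sum fun i e => e * (2 ^ (i : ℕ) - 1)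

/-- Exponent condition cutting out `T = H_* tmf`: `8 ∣ I₁`, `4 ∣ I₂`, `2 ∣ I₃`. -/
def Tcond (I : ℕ+ →₀ ℕ) : Prop := 8 ∣ I 1 ∧ 4 ∣ I 2 ∧ 2 ∣ I 3

/-- Exponent condition cutting out `B = H_* bo`: `4 ∣ I₁`, `2 ∣ I₂`. -/
def Bcond (I : ℕ+ →₀ ℕ) : Prop := 4 ∣ I 1 ∧ 2 ∣ I 2

/-- Exponent condition cutting out `Z = H_* HZ`: `2 ∣ I₁`. -/
def Zcond (I : ℕ+ →₀ ℕ) : Prop := 2 ∣ I 1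

/-- `T = H_* tmf`: the `F₂`-span of the monomials `ζ^I` with `8 ∣ I₁`, `4 ∣ I₂`, `2 ∣ I₃`. -/
def Tsub : Submodule (ZMod 2) DualSteenrod :=
  Submodule.span (ZMod 2) {m | ∃ I, Tcond I ∧ m = monomial I (1 : ZMod 2)}

/-- `B = H_* bo`: the `F₂`-span of the monomials `ζ^I` with `4 ∣ I₁`, `2 ∣ I₂`. -/
def Bsub : Submodule (ZMod 2) DualSteenrod :=
  Submodule.span (ZMod 2) {m | ∃ I, Bcond I ∧ m = monomial I (1 : ZMod 2)}

/-- `Z = H_* HZ`: the `F₂`-span of the monomials `ζ^I` with `2 ∣ I₁`. -/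
def Zsub : Submodule (ZMod 2) DualSteenrod :=
  Submodule.span (ZMod 2) {m | ∃ I, Zcond I ∧ m = monomial I (1 : ZMod 2)}

/-- The `F₂`-algebra homomorphism `V : A → A` with `V(ζ₁) = 1` and
`V(ζᵢ) = ζ_{i−1}` for `i ≥ 2`. -/
def V : DualSteenrod →ₐ[ZMod 2] DualSteenrod :=
  aeval fun i : ℕ+ => if i = 1 then 1 else X (i - 1)

/-- `N^tmf_{8i}`: the `F₂`-span of the monomials of `T` of weight `8i`. -/
def Ntmf (i : ℕ) : Submodule (ZMod 2) DualSteenrod :=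
  Submodule.span (ZMod 2) {m | ∃ I, Tcond I ∧ wt I = 8 * i ∧ m = monomial I (1 : ZMod 2)}

/-- `N^bo_{4j}`: the `F₂`-span of the monomials of `B` of weight `4j`. -/
def Nbo (j : ℕ) : Submodule (ZMod 2) DualSteenrod :=
  Submodule.span (ZMod 2) {m | ∃ I, Bcond I ∧ wt I = 4 * j ∧ m = monomial I (1 : ZMod 2)}

/-- `N^Z_{2k}`: the `F₂`-span of the monomials of `Z` of weight `2k`. -/
def NZ (k : ℕ) : Submodule (ZMod 2) DualSteenrod :=
  Submodule.span (ZMod 2) {m | ∃ I, Zcond I ∧ wt I = 2 * k ∧ m = monomial I (1 : ZMod 2)}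

/-- `M_bo(4i)`: the `F₂`-span of the monomials of `B` of weight at most `4i`. -/
def Mbo (i : ℕ) : Submodule (ZMod 2) DualSteenrod :=
  Submodule.span (ZMod 2) {m | ∃ I, Bcond I ∧ wt I ≤ 4 * i ∧ m = monomial I (1 : ZMod 2)}

/-- `M_HZ(2j)`: the `F₂`-span of the monomials of `Z` of weight at most `2j`
(the homology of the `j`-th integral Brown–Gitler spectrum). -/
def MHZ (j : ℕ) : Submodule (ZMod 2) DualSteenrod :=
  Submodule.span (ZMod 2) {m | ∃ I, Zcond I ∧ wt I ≤ 2 * j ∧ m = monomial I (1 : ZMod 2)}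

/-- The degree-`d` homogeneous part of `N^tmf_{8i}` (degrees taken in `ℤ`). -/
def NtmfDeg (i : ℕ) (d : ℤ) : Submodule (ZMod 2) DualSteenrod :=
  Submodule.span (ZMod 2)
    {m | ∃ I, Tcond I ∧ wt I = 8 * i ∧ (degW I : ℤ) = d ∧ m = monomial I (1 : ZMod 2)}

/-- The degree-`d` homogeneous part of `M_bo(4i)` (degrees taken in `ℤ`). -/
def MboDeg (i : ℕ) (d : ℤ) : Submodule (ZMod 2) DualSteenrod :=
  Submodule.span (ZMod 2)
    {m | ∃ I, Bcond I ∧ wt I ≤ 4 * i ∧ (degW I : ℤ) = d ∧ m = monomial I (1 : ZMod 2)}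

/-- The degree-`d` homogeneous part of `N^bo_{4j}` (degrees taken in `ℤ`). -/
def NboDeg (j : ℕ) (d : ℤ) : Submodule (ZMod 2) DualSteenrod :=
  Submodule.span (ZMod 2)
    {m | ∃ I, Bcond I ∧ wt I = 4 * j ∧ (degW I : ℤ) = d ∧ m = monomial I (1 : ZMod 2)}

/-- The degree-`d` homogeneous part of `M_HZ(2j)` (degrees taken in `ℤ`). -/
def MHZdeg (j : ℕ) (d : ℤ) : Submodule (ZMod 2) DualSteenrod :=
  Submodule.span (ZMod 2)
    {m | ∃ I, Zcond I ∧ wt I ≤ 2 * j ∧ (degW I : ℤ) = d ∧ m = monomial I (1 : ZMod 2)}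

/-- The degree-`d` homogeneous part of `T` (degrees taken in `ℤ`). -/
def Tdeg (d : ℤ) : Submodule (ZMod 2) DualSteenrod :=
  Submodule.span (ZMod 2)
    {m | ∃ I, Tcond I ∧ (degW I : ℤ) = d ∧ m = monomial I (1 : ZMod 2)}

/-- The exponent with first entry `n` followed by the entries of `J`. -/
def unsh (n : ℕ) (J : ℕ+ →₀ ℕ) : ℕ+ →₀ ℕ :=
  Finsupp.single 1 n + J.mapDomain (fun i => i + 1)

lemma succ_inj' : Function.Injective (fun i : ℕ+ => i + 1) := fun a b h => by
  simpa using h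

lemma succ_ne_one_pnat (i : ℕ+) : i + 1 ≠ 1 := fun h => by
  have := congrArg PNat.val h
  have := i.pos
  simp at *

lemma wt_unsh (n : ℕ) (J : ℕ+ →₀ ℕ) : wt (unsh n J) = n + 2 * wt J := by
  unfold wt unsh
  rw [Finsupp.sum_add_index' (by simp) (by intros; ring), Finsupp.sum_single_index (by simp),
    Finsupp.sum_mapDomain_index (by simp) (by intros; ring)]
  simp only [PNat.val_ofNat, Nat.sub_self, pow_zero, mul_one, Finsupp.sum, Finset.mul_sum]
  congr 1
  refine Finset.sum_congr rfl fun i _ => ?_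
  obtain ⟨k, hk⟩ : ∃ k, (i : ℕ) = k + 1 := ⟨(i : ℕ) - 1, by have := i.pos; omega⟩
  simp only [PNat.add_coe, hk, PNat.val_ofNat, Nat.add_sub_cancel]
  ring

lemma degW_unsh (n : ℕ) (J : ℕ+ →₀ ℕ) : degW (unsh n J) = wt (unsh n J) + degW J := by
  rw [wt_unsh]
  unfold wt degW unsh
  rw [Finsupp.sum_add_index' (by simp) (by intros; ring), Finsupp.sum_single_index (by simp),
    Finsupp.sum_mapDomain_index (by simp) (by intros; ring)]
  simp only [Finsupp.sum, Finset.mul_sum]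
  rw [add_assoc, ← Finset.sum_add_distrib]
  congr 1
  · simp
  refine Finset.sum_congr rfl fun i _ => ?_
  obtain ⟨k, hk⟩ : ∃ k, (i : ℕ) = k + 1 := ⟨(i : ℕ) - 1, by have := i.pos; omega⟩
  simp only [PNat.add_coe, hk, PNat.val_ofNat, Nat.add_sub_cancel]
  have h : 1 ≤ 2 ^ k := Nat.one_le_two_pow
  have e : 2 ^ (k + 1 + 1) - 1 = 2 * 2 ^ k + (2 ^ (k + 1) - 1) := by
    rw [pow_succ, pow_succ]; omega
  rw [e]; ring

lemma unsh_one (n : ℕ) (J : ℕ+ →₀ ℕ) : unsh n J 1 = n := by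
  unfold unsh
  rw [Finsupp.add_apply, Finsupp.mapDomain_of_notMem_range]
  · simp
  · rintro ⟨i, hi⟩
    exact succ_ne_one_pnat i hi

lemma unsh_succ (n : ℕ) (J : ℕ+ →₀ ℕ) (i : ℕ+) : unsh n J (i + 1) = J i := by
  unfold unsh
  have h := Finsupp.mapDomain_apply succ_inj' J i
  rw [Finsupp.add_apply, h, Finsupp.single_eq_of_ne (succ_ne_one_pnat i)]
  simp

lemma unsh_two (n : ℕ) (J : ℕ+ →₀ ℕ) : unsh n J 2 = J 1 := unsh_succ n J 1

lemma exists_unsh (I : ℕ+ →₀ ℕ) : ∃ n J, I = unsh n J := by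
  refine ⟨I 1, I.comapDomain (fun i => i + 1) succ_inj'.injOn, ?_⟩
  ext i
  induction i using PNat.recOn with
  | one => rw [unsh_one]
  | succ i _ => rw [unsh_succ, Finsupp.comapDomain_apply]

lemma V_unsh (n : ℕ) (J : ℕ+ →₀ ℕ) :
    V (monomial (unsh n J) (1 : ZMod 2)) = monomial J 1 := by
  have h : monomial (unsh n J) (1 : ZMod 2)
      = X 1 ^ n * rename (fun i : ℕ+ => i + 1) (monomial J (1 : ZMod 2)) := by
    rw [rename_monomial, X_pow_eq_monomial, monomial_mul, one_mul]; rfl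
  rw [h, map_mul, map_pow]
  unfold V
  rw [aeval_X, aeval_rename, if_pos rfl, one_pow, one_mul]
  have : ((fun i : ℕ+ => if i = 1 then (1 : DualSteenrod) else X (i - 1)) ∘ fun i => i + 1)
      = X := by
    funext i
    have hs : i + 1 - 1 = i := by
      apply PNat.eq
      rw [PNat.sub_coe, if_pos (one_lt_of_gt (PNat.lt_add_right i 1))]
      simp
    simp [succ_ne_one_pnat, hs]
  rw [this, aeval_X_left_apply]

lemma even_wt {J : ℕ+ →₀ ℕ} (h : Zcond J) : 2 ∣ wt J := by
  obtain ⟨n, K, rfl⟩ := exists_unsh J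
  unfold Zcond at h
  rw [unsh_one] at h
  rw [wt_unsh]
  omega

/-- The exponent conditions on both sides correspond under `unsh`. -/
lemma cond_iff (j n : ℕ) (J : ℕ+ →₀ ℕ) :
    (Bcond (unsh n J) ∧ wt (unsh n J) = 4 * j) ↔
      (Zcond J ∧ wt J ≤ 2 * j ∧ n = 4 * j - 2 * wt J) := by
  unfold Bcond
  rw [unsh_one, unsh_two, wt_unsh]
  constructor
  · rintro ⟨⟨_, h2⟩, h3⟩
    exact ⟨h2, by omega, by omega⟩
  · rintro ⟨h1, h2, h3⟩
    have := even_wt h1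
    exact ⟨⟨by omega, h1⟩, by omega⟩

/-- A linear left inverse of `V` on `Nbo j`. -/
def Linv (j : ℕ) : DualSteenrod →ₗ[ZMod 2] DualSteenrod :=
  (basisMonomials ℕ+ (ZMod 2)).constr (ZMod 2)
    (fun J => monomial (unsh (4 * j - 2 * wt J) J) (1 : ZMod 2))

lemma Linv_monomial (j : ℕ) (J : ℕ+ →₀ ℕ) :
    Linv j (monomial J 1) = monomial (unsh (4 * j - 2 * wt J) J) (1 : ZMod 2) := by
  have := (basisMonomials ℕ+ (ZMod 2)).constr_basis (ZMod 2)
    (fun J => (monomial (unsh (4 * j - 2 * wt J) J) (1 : ZMod 2) : DualSteenrod)) J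
  rwa [coe_basisMonomials] at this

/-- For each `j ≥ 0`, the image under `V` of `N^bo_{4j}` is exactly `M_HZ(2j)`, and for
each degree `d`, `V` restricts to an `F₂`-linear isomorphism from the degree-`d` part of
`N^bo_{4j}` onto the degree-`(d − 4j)` part of `M_HZ(2j)`.
Hence `N^bo_{4j} ≅ Σ^{4j} M_HZ(2j)` as graded `F₂`-vector spaces. -/
theorem Nbo_iso_suspension_MHZ :
    ∀ j : ℕ,
      Submodule.map V.toLinearMap (Nbo j) = MHZ j ∧
      ∀ d : ℤ,
        Submodule.map V.toLinearMap (NboDeg j d) = MHZdeg j (d - 4 * j) ∧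
        (∀ x ∈ NboDeg j d, ∀ y ∈ NboDeg j d, V x = V y → x = y) := by
  intro j
  refine ⟨?_, fun d => ⟨?_, ?_⟩⟩
  · unfold Nbo MHZ
    rw [Submodule.map_span]
    congr 1
    ext m
    constructor
    · rintro ⟨_, ⟨I, hB, hw, rfl⟩, rfl⟩
      obtain ⟨n, J, rfl⟩ := exists_unsh I
      obtain ⟨h1, h2, -⟩ := (cond_iff j n J).1 ⟨hB, hw⟩
      exact ⟨J, h1, h2, V_unsh n J⟩
    · rintro ⟨J, h1, h2, rfl⟩
      obtain ⟨hB, hw⟩ := (cond_iff j _ J).2 ⟨h1, h2, rfl⟩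
      exact ⟨_, ⟨_, hB, hw, rfl⟩, V_unsh _ J⟩
  · unfold NboDeg MHZdeg
    rw [Submodule.map_span]
    congr 1
    ext m
    constructor
    · rintro ⟨_, ⟨I, hB, hw, hd, rfl⟩, rfl⟩
      obtain ⟨n, J, rfl⟩ := exists_unsh I
      obtain ⟨h1, h2, -⟩ := (cond_iff j n J).1 ⟨hB, hw⟩
      rw [degW_unsh, hw] at hd
      exact ⟨J, h1, h2, by push_cast at hd; omega, V_unsh n J⟩
    · rintro ⟨J, h1, h2, hd, rfl⟩
      obtain ⟨hB, hw⟩ := (cond_iff j _ J).2 ⟨h1, h2, rfl⟩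
      refine ⟨_, ⟨_, hB, hw, ?_, rfl⟩, V_unsh _ J⟩
      rw [degW_unsh, hw]
      push_cast
      omega
  · have key : ∀ x ∈ NboDeg j d, Linv j (V x) = x := by
      intro x hx
      refine LinearMap.eqOn_span (f := (Linv j).comp V.toLinearMap) (g := LinearMap.id) ?_ hx
      rintro _ ⟨I, hB, hw, -, rfl⟩
      obtain ⟨n, J, rfl⟩ := exists_unsh I
      obtain ⟨-, -, h3⟩ := (cond_iff j n J).1 ⟨hB, hw⟩
      change Linv j (V _) = _
      rw [V_unsh, Linv_monomial, ← h3]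
      rfl
    intro x hx y hy hxy
    rw [← key x hx, ← key y hy, hxy]
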